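/- Let N = 1. A map μ : C^1 → ℝ is an invariant, continuous and monotone increasing valuation on C^1 if and only if there exist non-atomic Radon measures ν_0 and ν_1 on [0,∞), with ν_1([0,δ]) = 0 for some δ > 0, such that μ(f) = ν_0([0, M(f)]) + ∫_{(0,∞)} vol_1(L_t(f)) dν_1(t) for every f ∈ C^1, where M(f) is the maximum of f on ℝ (with M(0) = 0) and vol_1 is the Lebesgue measure on ℝ. -/

import Mathlib

open Filter Topology MeasureTheory

noncomputable section

/-- A function `f : ℝ → ℝ` is quasi-concave if it is nonnegative and all its
superlevel sets `{x | t ≤ f x}` for `t > 0` are empty or compact and convex. -/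
def QuasiConcave1 (f : ℝ → ℝ) : Prop :=
  (∀ x, 0 ≤ f x) ∧
  ∀ t : ℝ, 0 < t →
    {x | t ≤ f x} = ∅ ∨ (IsCompact {x | t ≤ f x} ∧ Convex ℝ {x | t ≤ f x})

/-- `μ` is a valuation on `C^1`: it vanishes on the zero function and satisfies the
inclusion-exclusion property with respect to pointwise max and min. -/
def IsValuation1 (μ : (ℝ → ℝ) → ℝ) : Prop :=
  μ (fun _ => 0) = 0 ∧
  ∀ f g : ℝ → ℝ, QuasiConcave1 f → QuasiConcave1 g →
    QuasiConcave1 (fun x => max (f x) (g x)) →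
    μ (fun x => max (f x) (g x)) + μ (fun x => min (f x) (g x)) = μ f + μ g

/-- `μ` is invariant under rigid motions (isometries) of `ℝ`. -/
def IsInvariantVal1 (μ : (ℝ → ℝ) → ℝ) : Prop :=
  ∀ (T : ℝ ≃ᵢ ℝ) (f : ℝ → ℝ), QuasiConcave1 f → μ (fun x => f (T x)) = μ f

/-- `μ` is continuous: it preserves limits of monotone pointwise convergent sequences
of quasi-concave functions. -/
def IsContinuousVal1 (μ : (ℝ → ℝ) → ℝ) : Prop :=
  ∀ (fi : ℕ → ℝ → ℝ) (f : ℝ → ℝ),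
    (∀ i, QuasiConcave1 (fi i)) → QuasiConcave1 f →
    (Monotone fi ∨ Antitone fi) →
    (∀ x, Tendsto (fun i => fi i x) atTop (𝓝 (f x))) →
    Tendsto (fun i => μ (fi i)) atTop (𝓝 (μ f))

/-- `μ` is monotone increasing: `f ≤ g` pointwise implies `μ f ≤ μ g`. -/
def IsMonotoneVal1 (μ : (ℝ → ℝ) → ℝ) : Prop :=
  ∀ f g : ℝ → ℝ, QuasiConcave1 f → QuasiConcave1 g → (∀ x, f x ≤ g x) → μ f ≤ μ g

/-!
A continuous valuation is determined by its values on the functions `t • 1_[a,b]`: cutting off the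
top level of a function with finitely many values expresses `μ` through indicators of intervals,
and dyadic rounding approximates every quasi-concave function from below by such functions.
For fixed `t`, invariance and the valuation property turn `b - a ↦ μ (t • 1_[a,b])` into a solution
of the Cauchy equation up to a constant, so that `μ (t • 1_[a,b]) = G t + F t * (b - a)` and hence
`μ f = G (max f) + ∫ F (f x) dx`. Monotonicity of `μ` is that of `G` and `F`, and `F` has to vanish
near `0`, since otherwise a function decaying slowly enough would have infinite value.
Finally `G` and `F` are the distribution functions of `ν₀` and `ν₁` by the Stieltjes construction,
and the layer cake formula identifies the two representations.
-/

/-! ### Quasi-concave functions -/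

namespace QuasiConcave1

variable {f g : ℝ → ℝ}

lemma isCompact_superlevel (hf : QuasiConcave1 f) {t : ℝ} (ht : 0 < t) :
    IsCompact {x | t ≤ f x} :=
  (hf.2 t ht).elim (fun h => h ▸ isCompact_empty) And.left

lemma convex_superlevel (hf : QuasiConcave1 f) {t : ℝ} (ht : 0 < t) : Convex ℝ {x | t ≤ f x} :=
  (hf.2 t ht).elim (fun h => h ▸ convex_empty) And.right

lemma isClosed_superlevel (hf : QuasiConcave1 f) (t : ℝ) : IsClosed {x | t ≤ f x} := by
  rcases lt_or_ge 0 t with ht | ht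
  · exact (hf.isCompact_superlevel ht).isClosed
  · convert isClosed_univ using 1
    exact Set.eq_univ_of_forall fun x => ht.trans (hf.1 x)

protected lemma upperSemicontinuous (hf : QuasiConcave1 f) : UpperSemicontinuous f :=
  upperSemicontinuous_iff_isClosed_preimage.2 hf.isClosed_superlevel

protected lemma measurable (hf : QuasiConcave1 f) : Measurable f :=
  hf.upperSemicontinuous.measurable

lemma isGreatest_iSup (hf : QuasiConcave1 f) : IsGreatest (Set.range f) (⨆ x, f x) := by
  suffices ∃ a, ∀ x, f x ≤ f a by
    obtain ⟨a, ha⟩ := this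
    have hmax : IsGreatest (Set.range f) (f a) := ⟨⟨a, rfl⟩, Set.forall_mem_range.2 ha⟩
    exact (show ⨆ x, f x = f a from hmax.csSup_eq) ▸ hmax
  by_cases hpos : ∃ b, 0 < f b
  · obtain ⟨b, hb⟩ := hpos
    obtain ⟨a, hba, hmax⟩ := (hf.upperSemicontinuous.upperSemicontinuousOn _).exists_isMaxOn
      ⟨b, le_refl (f b)⟩ (hf.isCompact_superlevel hb)
    exact ⟨a, fun x => (le_total (f b) (f x)).elim (fun h => hmax h) (fun h => h.trans hba)⟩
  · push Not at hpos
    exact ⟨0, fun x => (hpos x).trans (hf.1 0)⟩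

lemma exists_eq_iSup (hf : QuasiConcave1 f) : ∃ a, f a = ⨆ x, f x :=
  hf.isGreatest_iSup.1

protected lemma le_iSup (hf : QuasiConcave1 f) (x : ℝ) : f x ≤ ⨆ x, f x :=
  hf.isGreatest_iSup.2 ⟨x, rfl⟩

lemma bddAbove_range (hf : QuasiConcave1 f) : BddAbove (Set.range f) :=
  ⟨_, hf.isGreatest_iSup.2⟩

lemma iSup_nonneg (hf : QuasiConcave1 f) : 0 ≤ ⨆ x, f x :=
  Real.iSup_nonneg hf.1

lemma indicator_const {K : Set ℝ} (hK : IsCompact K) (hK' : Convex ℝ K) {t : ℝ} (ht : 0 ≤ t) :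
    QuasiConcave1 (K.indicator fun _ => t) := by
  refine ⟨fun x => Set.indicator_nonneg (fun _ _ => ht) x, fun s hs => ?_⟩
  rcases le_or_gt s t with hst | hst
  · right
    have hlevel : {x | s ≤ K.indicator (fun _ => t) x} = K := by
      ext x
      by_cases hx : x ∈ K <;> simp [hx, hst, hs]
    exact hlevel.symm ▸ ⟨hK, hK'⟩
  · left
    refine Set.eq_empty_of_forall_notMem fun x hx => ?_
    exact (hx.trans (Set.indicator_le_self' (fun _ _ => ht) x)).not_gt hst

lemma indicator_Icc (a b : ℝ) {t : ℝ} (ht : 0 ≤ t) :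
    QuasiConcave1 ((Set.Icc a b).indicator fun _ => t) :=
  indicator_const isCompact_Icc (convex_Icc a b) ht

protected lemma zero : QuasiConcave1 fun _ => 0 := by
  simpa only [Set.indicator_zero] using indicator_Icc 0 0 le_rfl

protected lemma min (hf : QuasiConcave1 f) (hg : QuasiConcave1 g) :
    QuasiConcave1 fun x => min (f x) (g x) := by
  refine ⟨fun x => le_min (hf.1 x) (hg.1 x), fun t ht => Or.inr ?_⟩
  have hlevel : {x | t ≤ min (f x) (g x)} = {x | t ≤ f x} ∩ {x | t ≤ g x} := by
    ext x
    simp only [Set.mem_ofPred_eq, Set.mem_inter_iff, le_min_iff]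
  rw [hlevel]
  exact ⟨(hf.isCompact_superlevel ht).inter_right (hg.isClosed_superlevel t),
    (hf.convex_superlevel ht).inter (hg.convex_superlevel ht)⟩

lemma comp_homeomorph (hf : QuasiConcave1 f) (e : ℝ ≃ₜ ℝ) : QuasiConcave1 fun x => f (e x) := by
  refine ⟨fun x => hf.1 (e x), fun t ht => Or.inr ⟨?_, ?_⟩⟩
  · exact e.isCompact_preimage.2 (hf.isCompact_superlevel ht)
  · rw [Real.convex_iff_isPreconnected]
    exact e.isPreconnected_preimage.2 (hf.convex_superlevel ht).isPreconnected

lemma comp_monotone (hf : QuasiConcave1 f) {φ : ℝ → ℝ} (hφ : Monotone φ)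
    (hφ_usc : UpperSemicontinuous φ) (hφ0 : φ 0 = 0) : QuasiConcave1 fun x => φ (f x) := by
  refine ⟨fun x => hφ0 ▸ hφ (hf.1 x), fun t ht => ?_⟩
  rcases Set.eq_empty_or_nonempty {y | t ≤ φ y} with hempty | hne
  · exact Or.inl (Set.eq_empty_of_forall_notMem fun x hx => Set.notMem_empty (f x) (hempty ▸ hx))
  have hpos : ∀ y, t ≤ φ y → 0 < y := fun y hy =>
    hφ.reflect_lt (hφ0.trans_lt (ht.trans_le hy))
  have hbdd : BddBelow {y | t ≤ φ y} := ⟨0, fun y hy => (hpos y hy).le⟩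
  have hmem : t ≤ φ (sInf {y | t ≤ φ y}) :=
    (upperSemicontinuous_iff_isClosed_preimage.1 hφ_usc t).csInf_mem hne hbdd
  have hlevel : {x | t ≤ φ (f x)} = {x | sInf {y | t ≤ φ y} ≤ f x} := by
    ext x
    exact ⟨fun hx => csInf_le hbdd hx, fun hx => hmem.trans (hφ hx)⟩
  exact hlevel ▸ hf.2 _ (hpos _ hmem)

lemma min_const (hf : QuasiConcave1 f) {c : ℝ} (hc : 0 ≤ c) :
    QuasiConcave1 fun x => min (f x) c :=
  hf.comp_monotone (fun _ _ h => min_le_min_right c h)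
    (continuous_id.min continuous_const).upperSemicontinuous (min_eq_left hc)

lemma iSup_max (hf : QuasiConcave1 f) (hg : QuasiConcave1 g) :
    ⨆ x, max (f x) (g x) = max (⨆ x, f x) (⨆ x, g x) :=
  ciSup_sup_eq hf.bddAbove_range hg.bddAbove_range

-- A superlevel set of `max f g` is connected and covered by those of `f` and `g`,
-- so the latter intersect as soon as both are nonempty.
lemma iSup_min (hf : QuasiConcave1 f) (hg : QuasiConcave1 g)
    (hmax : QuasiConcave1 fun x => max (f x) (g x)) :
    ⨆ x, min (f x) (g x) = min (⨆ x, f x) (⨆ x, g x) := by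
  have hmin := hf.min hg
  obtain ⟨a, ha⟩ := hf.exists_eq_iSup
  obtain ⟨b, hb⟩ := hg.exists_eq_iSup
  set s := min (⨆ x, f x) (⨆ x, g x)
  apply le_antisymm
  · exact ciSup_le fun x => min_le_min (hf.le_iSup x) (hg.le_iSup x)
  rcases le_or_gt s 0 with hs0 | hs0
  · exact hs0.trans hmin.iSup_nonneg
  have hcover : {x | s ≤ max (f x) (g x)} ⊆ {x | s ≤ f x} ∪ {x | s ≤ g x} :=
    fun x (hx : s ≤ max (f x) (g x)) => le_max_iff.1 hx
  have hsa : s ≤ f a := ha ▸ min_le_left _ _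
  have hsb : s ≤ g b := hb ▸ min_le_right _ _
  obtain ⟨x, -, hxf, hxg⟩ := isPreconnected_closed_iff.1
    (hmax.convex_superlevel hs0).isPreconnected _ _ (hf.isClosed_superlevel s)
    (hg.isClosed_superlevel s) hcover ⟨a, le_max_of_le_left hsa, hsa⟩
    ⟨b, le_max_of_le_right hsb, hsb⟩
  exact (le_min hxf hxg).trans (hmin.le_iSup x)

protected lemma iSup_mono (hg : QuasiConcave1 g) (hfg : ∀ x, f x ≤ g x) :
    ⨆ x, f x ≤ ⨆ x, g x :=
  ciSup_mono hg.bddAbove_range hfg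

lemma iSup_indicator_const {K : Set ℝ} (hK : K.Nonempty) {t : ℝ} (ht : 0 ≤ t) :
    ⨆ x, K.indicator (fun _ => t) x = t := by
  obtain ⟨a, ha⟩ := hK
  have hmax : IsGreatest (Set.range (K.indicator fun _ => t)) t :=
    ⟨⟨a, Set.indicator_of_mem ha _⟩,
      Set.forall_mem_range.2 (Set.indicator_le_self' fun _ _ => ht)⟩
  exact hmax.csSup_eq

variable {u : ℕ → ℝ → ℝ}

lemma tendsto_iSup_of_monotone (hu : ∀ i, QuasiConcave1 (u i)) (hf : QuasiConcave1 f)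
    (hmono : Monotone u) (hlim : ∀ x, Tendsto (fun i => u i x) atTop (𝓝 (f x))) :
    Tendsto (fun i => ⨆ x, u i x) atTop (𝓝 (⨆ x, f x)) := by
  obtain ⟨a, ha⟩ := hf.exists_eq_iSup
  refine tendsto_of_tendsto_of_tendsto_of_le_of_le (ha ▸ hlim a) tendsto_const_nhds
    (fun i => (hu i).le_iSup a) (fun i => hf.iSup_mono fun x => ?_)
  exact Monotone.ge_of_tendsto (fun _ _ hij => hmono hij x) (hlim x) i

-- If `t > ⨆ x, f x` then the nested compact sets `{x | t ≤ u i x}` have empty intersection,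
-- so one of them is empty.
lemma tendsto_iSup_of_antitone (hu : ∀ i, QuasiConcave1 (u i)) (hf : QuasiConcave1 f)
    (hanti : Antitone u) (hlim : ∀ x, Tendsto (fun i => u i x) atTop (𝓝 (f x))) :
    Tendsto (fun i => ⨆ x, u i x) atTop (𝓝 (⨆ x, f x)) := by
  have hle : ∀ i, ⨆ x, f x ≤ ⨆ x, u i x := fun i => (hu i).iSup_mono fun x =>
    Antitone.le_of_tendsto (fun _ _ hij => hanti hij x) (hlim x) i
  refine tendsto_order.2 ⟨fun s hs => .of_forall fun i => hs.trans_le (hle i), fun t ht => ?_⟩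
  suffices ∃ i, ⨆ x, u i x < t by
    obtain ⟨i, hi⟩ := this
    filter_upwards [eventually_ge_atTop i] with j hij
    exact ((hu i).iSup_mono (hanti hij)).trans_lt hi
  by_contra! hall
  obtain ⟨x, hx⟩ := IsCompact.nonempty_iInter_of_sequence_nonempty_isCompact_isClosed
    (fun i => {x | t ≤ u i x}) (fun i x hx => le_trans hx (hanti i.le_succ x))
    (fun i => (hu i).exists_eq_iSup.imp fun _ ha => (hall i).trans_eq ha.symm)
    ((hu 0).isCompact_superlevel (hf.iSup_nonneg.trans_lt ht))
    (fun i => (hu i).isClosed_superlevel t)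
  have hxt : t ≤ f x := ge_of_tendsto' (hlim x) (Set.mem_iInter.1 hx)
  exact (hxt.trans (hf.le_iSup x)).not_gt ht

section Integral

variable {F : ℝ → ℝ} {δ : ℝ}

lemma exists_integrable_bound_comp (hf : QuasiConcave1 f) (hF : Continuous F) (hδ : 0 < δ)
    (hF0 : ∀ s ∈ Set.Icc 0 δ, F s = 0) :
    ∃ B : ℝ → ℝ, Integrable B ∧ ∀ g : ℝ → ℝ, (∀ x, 0 ≤ g x) → (∀ x, g x ≤ f x) →
      ∀ x, ‖F (g x)‖ ≤ B x := by
  obtain ⟨C, hC⟩ := isCompact_Icc.exists_bound_of_continuousOn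
    (hF.continuousOn (s := Set.Icc 0 (⨆ x, f x)))
  refine ⟨{x | δ ≤ f x}.indicator fun _ => C,
    (integrable_indicator_iff (hf.isClosed_superlevel δ).measurableSet).2
      (integrableOn_const (hf.isCompact_superlevel hδ).measure_lt_top.ne), fun g hg hgf x => ?_⟩
  by_cases hx : δ ≤ f x
  · rw [Set.indicator_of_mem (s := {x | δ ≤ f x}) hx]
    exact hC _ ⟨hg x, (hgf x).trans (hf.le_iSup x)⟩
  · rw [hF0 _ ⟨hg x, (hgf x).trans (not_le.1 hx).le⟩, norm_zero]
    exact (Set.indicator_of_notMem (s := {x | δ ≤ f x}) hx _).ge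

lemma integrable_comp (hf : QuasiConcave1 f) (hF : Continuous F) (hδ : 0 < δ)
    (hF0 : ∀ s ∈ Set.Icc 0 δ, F s = 0) : Integrable fun x => F (f x) := by
  obtain ⟨B, hB, hle⟩ := hf.exists_integrable_bound_comp hF hδ hF0
  exact hB.mono' (hF.measurable.comp hf.measurable).aestronglyMeasurable
    (.of_forall (hle f hf.1 fun _ => le_rfl))

lemma tendsto_integral_comp (hu : ∀ i, QuasiConcave1 (u i)) (hf : QuasiConcave1 f)
    (hF : Continuous F) (hδ : 0 < δ) (hF0 : ∀ s ∈ Set.Icc 0 δ, F s = 0)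
    (hmono : Monotone u ∨ Antitone u) (hlim : ∀ x, Tendsto (fun i => u i x) atTop (𝓝 (f x))) :
    Tendsto (fun i => ∫ x, F (u i x)) atTop (𝓝 (∫ x, F (f x))) := by
  obtain ⟨h, hh, huh⟩ : ∃ h, QuasiConcave1 h ∧ ∀ i x, u i x ≤ h x := by
    rcases hmono with hmono | hanti
    · exact ⟨f, hf, fun i x => Monotone.ge_of_tendsto (fun _ _ hij => hmono hij x) (hlim x) i⟩
    · exact ⟨u 0, hu 0, fun i => hanti i.zero_le⟩
  obtain ⟨B, hB, hle⟩ := hh.exists_integrable_bound_comp hF hδ hF0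
  exact tendsto_integral_of_dominated_convergence B
    (fun i => (hF.measurable.comp (hu i).measurable).aestronglyMeasurable) hB
    (fun i => .of_forall (hle _ (hu i).1 (huh i)))
    (.of_forall fun x => (hF.tendsto _).comp (hlim x))

end Integral

end QuasiConcave1

/-! ### Continuous valuations are determined by their values on intervals -/

namespace IsValuation1

variable {μ ν : (ℝ → ℝ) → ℝ} {f : ℝ → ℝ}

-- `f` is the maximum of its truncation at `c` and `M` times the indicator of `{x | M ≤ f x}`.
lemma map_add_of_gap (hμ : IsValuation1 μ) (hf : QuasiConcave1 f) {c M : ℝ} (hc : 0 ≤ c)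
    (hcM : c < M) (hgap : ∀ x, f x ≤ c ∨ f x = M) :
    μ f + μ ({x | M ≤ f x}.indicator fun _ => c) =
      μ (fun x => min (f x) c) + μ ({x | M ≤ f x}.indicator fun _ => M) := by
  have hM : 0 < M := hc.trans_lt hcM
  set K := {x | M ≤ f x}
  have hmax : (fun x => max (min (f x) c) (K.indicator (fun _ => M) x)) = f := by
    ext x
    rcases hgap x with hx | hx
    · have hxK : x ∉ K := (hx.trans_lt hcM).not_ge
      rw [Set.indicator_of_notMem hxK, min_eq_left hx, max_eq_left (hf.1 x)]
    · have hxK : x ∈ K := hx.ge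
      rw [Set.indicator_of_mem hxK, max_eq_right ((min_le_right _ _).trans hcM.le), hx]
  have hmin : (fun x => min (min (f x) c) (K.indicator (fun _ => M) x)) =
      K.indicator fun _ => c := by
    ext x
    rcases hgap x with hx | hx
    · have hxK : x ∉ K := (hx.trans_lt hcM).not_ge
      simp only [Set.indicator_of_notMem hxK, min_eq_right (le_min (hf.1 x) hc)]
    · have hxK : x ∈ K := hx.ge
      simp only [Set.indicator_of_mem hxK, hx, min_eq_right hcM.le, min_eq_left hcM.le]
  have hval := hμ.2 _ _ (hf.min_const hc) (.indicator_const (hf.isCompact_superlevel hM)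
    (hf.convex_superlevel hM) hM.le) (by rwa [hmax])
  rwa [hmax, hmin] at hval

lemma map_indicator_union_add_inter (hμ : IsValuation1 μ) {A B : Set ℝ} {t : ℝ} (ht : 0 ≤ t)
    (hA : QuasiConcave1 (A.indicator fun _ => t)) (hB : QuasiConcave1 (B.indicator fun _ => t))
    (hAB : QuasiConcave1 ((A ∪ B).indicator fun _ => t)) :
    μ ((A ∪ B).indicator fun _ => t) + μ ((A ∩ B).indicator fun _ => t) =
      μ (A.indicator fun _ => t) + μ (B.indicator fun _ => t) := by
  have hmax : (fun x => max (A.indicator (fun _ => t) x) (B.indicator (fun _ => t) x)) =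
      (A ∪ B).indicator fun _ => t := by
    ext x
    by_cases hxA : x ∈ A <;> by_cases hxB : x ∈ B <;> simp [hxA, hxB, ht]
  have hmin : (fun x => min (A.indicator (fun _ => t) x) (B.indicator (fun _ => t) x)) =
      (A ∩ B).indicator fun _ => t := by
    ext x
    by_cases hxA : x ∈ A <;> by_cases hxB : x ∈ B <;> simp [hxA, hxB, ht]
  have hval := hμ.2 _ _ hA hB (by rwa [hmax])
  rwa [hmax, hmin] at hval

lemma eq_indicator_of_eq_indicator_Icc (hμ : IsValuation1 μ) (hν : IsValuation1 ν) {t : ℝ}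
    (h : ∀ a b, a ≤ b → μ ((Set.Icc a b).indicator fun _ => t) =
      ν ((Set.Icc a b).indicator fun _ => t))
    {K : Set ℝ} (hK : IsCompact K) (hK' : Convex ℝ K) :
    μ (K.indicator fun _ => t) = ν (K.indicator fun _ => t) := by
  rcases K.eq_empty_or_nonempty with rfl | hne
  · simpa only [Set.indicator_empty] using hμ.1.trans hν.1.symm
  · have hIcc := eq_Icc_of_connected_compact ⟨hne, hK'.isPreconnected⟩ hK
    rw [hIcc]
    exact h _ _ (Set.nonempty_Icc.1 (hIcc ▸ hne))

lemma eq_of_finite_range (hμ : IsValuation1 μ) (hν : IsValuation1 ν)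
    (h : ∀ t a b, 0 ≤ t → a ≤ b → μ ((Set.Icc a b).indicator fun _ => t) =
      ν ((Set.Icc a b).indicator fun _ => t))
    (hf : QuasiConcave1 f) (hfin : (Set.range f).Finite) : μ f = ν f := by
  induction hn : (Set.range f).ncard using Nat.strong_induction_on generalizing f with
  | _ n ih =>
  set M := ⨆ x, f x
  have hM : 0 ≤ M := hf.iSup_nonneg
  rcases hM.eq_or_lt with hM0 | hMpos
  · have hf0 : f = fun _ => 0 :=
      funext fun x => le_antisymm (hM0 ▸ hf.le_iSup x) (hf.1 x)
    rw [hf0, hμ.1, hν.1]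
  have hne : (Set.range f ∩ Set.Iio M).Nonempty := by
    obtain ⟨x, hx⟩ := (Set.ne_univ_iff_exists_notMem _).1 (hf.isCompact_superlevel hMpos).ne_univ
    exact ⟨f x, ⟨x, rfl⟩, Set.mem_Iio.2 (lt_of_not_ge hx)⟩
  obtain ⟨c, ⟨⟨y, rfl⟩, hcM⟩, hcmax⟩ :=
    Set.exists_max_image _ id (hfin.subset Set.inter_subset_left) hne
  have hgap : ∀ x, f x ≤ f y ∨ f x = M := fun x =>
    (hf.le_iSup x).lt_or_eq.imp_left fun hx => hcmax _ ⟨⟨x, rfl⟩, hx⟩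
  have hsub : Set.range (fun x => min (f x) (f y)) ⊂ Set.range f := by
    refine ⟨Set.range_subset_iff.2 fun x => min_choice (f x) (f y) |>.elim
      (fun hx => ⟨x, hx.symm⟩) (fun hx => ⟨y, hx.symm⟩), fun hle => ?_⟩
    obtain ⟨x, hx⟩ := hle hf.isGreatest_iSup.1
    exact (hx.ge.trans (min_le_right (f x) (f y))).not_gt hcM
  have htrunc := ih _ (hn ▸ Set.ncard_lt_ncard hsub hfin) (hf.min_const (hf.1 y))
    (hfin.subset hsub.subset) rfl
  have hstep : ∀ t, 0 ≤ t → μ ({x | M ≤ f x}.indicator fun _ => t) =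
      ν ({x | M ≤ f x}.indicator fun _ => t) := fun t ht =>
    hμ.eq_indicator_of_eq_indicator_Icc hν (fun a b => h t a b ht)
      (hf.isCompact_superlevel hMpos) (hf.convex_superlevel hMpos)
  linarith [hμ.map_add_of_gap hf (hf.1 y) hcM hgap, hν.map_add_of_gap hf (hf.1 y) hcM hgap,
    hstep M hM, hstep (f y) (hf.1 y)]

end IsValuation1

/-- The largest multiple of `2⁻ⁱ` up to `y ≥ 0`; composing with it approximates a function from
below by functions with discrete range. Negative `y` are sent to `0`. -/
def dyadicFloor (i : ℕ) (y : ℝ) : ℝ := ⌊2 ^ i * y⌋₊ / 2 ^ i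

lemma upperSemicontinuous_natFloor : UpperSemicontinuous (Nat.floor : ℝ → ℕ) := by
  refine upperSemicontinuous_iff_isClosed_preimage.2 fun n => ?_
  rcases eq_or_ne n 0 with rfl | hn
  · simpa only [← Nat.bot_eq_zero, Set.Ici_bot, Set.preimage_univ] using isClosed_univ
  · convert isClosed_Ici (a := (n : ℝ)) using 1
    ext y
    exact Nat.le_floor_iff' hn

lemma monotone_dyadicFloor (i : ℕ) : Monotone (dyadicFloor i) := fun y z hyz => by
  unfold dyadicFloor
  gcongr

lemma upperSemicontinuous_dyadicFloor (i : ℕ) : UpperSemicontinuous (dyadicFloor i) := by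
  have hcast : Continuous fun n : ℕ => (n : ℝ) / 2 ^ i := continuous_of_discreteTopology
  exact hcast.comp_upperSemicontinuous
    (upperSemicontinuous_natFloor.comp (continuous_const.mul continuous_id))
    fun m n hmn => div_le_div_of_nonneg_right (Nat.cast_le.2 hmn) (by positivity)

lemma dyadicFloor_zero (i : ℕ) : dyadicFloor i 0 = 0 := by
  simp [dyadicFloor]

lemma monotone_dyadicFloor_left {y : ℝ} (hy : 0 ≤ y) : Monotone fun i => dyadicFloor i y := by
  refine monotone_nat_of_le_succ fun i => ?_
  have hfloor : 2 * ⌊2 ^ i * y⌋₊ ≤ ⌊2 ^ (i + 1) * y⌋₊ := by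
    apply Nat.le_floor
    rw [Nat.cast_mul, pow_succ', mul_assoc]
    exact mul_le_mul_of_nonneg_left (Nat.floor_le (by positivity)) zero_le_two
  calc dyadicFloor i y = (2 * ⌊2 ^ i * y⌋₊ : ℕ) / 2 ^ (i + 1) := by
        rw [dyadicFloor, Nat.cast_mul, pow_succ', Nat.cast_two, mul_div_mul_left _ _ two_ne_zero]
    _ ≤ dyadicFloor (i + 1) y := by
        unfold dyadicFloor
        gcongr

lemma tendsto_dyadicFloor {y : ℝ} (hy : 0 ≤ y) :
    Tendsto (fun i => dyadicFloor i y) atTop (𝓝 y) := by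
  have hpow : Tendsto (fun i : ℕ => (2 : ℝ) ^ i) atTop atTop :=
    tendsto_pow_atTop_atTop_of_one_lt one_lt_two
  simpa only [dyadicFloor, Function.comp_def, mul_comm y] using
    (tendsto_nat_floor_mul_div_atTop hy).comp hpow

lemma finite_range_dyadicFloor_comp {α : Type*} {f : α → ℝ} (hf : BddAbove (Set.range f))
    (i : ℕ) : (Set.range fun x => dyadicFloor i (f x)).Finite := by
  obtain ⟨M, hM⟩ := hf
  refine ((Set.finite_Iic ⌊2 ^ i * M⌋₊).image fun n : ℕ => (n : ℝ) / 2 ^ i).subset ?_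
  rintro _ ⟨x, rfl⟩
  have hx : f x ≤ M := hM ⟨x, rfl⟩
  exact ⟨⌊2 ^ i * f x⌋₊, Nat.floor_mono (by gcongr), rfl⟩

theorem IsValuation1.eq_of_eq_indicator_Icc {μ ν : (ℝ → ℝ) → ℝ} (hμ : IsValuation1 μ)
    (hν : IsValuation1 ν) (hμ_cont : IsContinuousVal1 μ) (hν_cont : IsContinuousVal1 ν)
    (h : ∀ t a b, 0 ≤ t → a ≤ b → μ ((Set.Icc a b).indicator fun _ => t) =
      ν ((Set.Icc a b).indicator fun _ => t))
    {f : ℝ → ℝ} (hf : QuasiConcave1 f) : μ f = ν f := by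
  let u : ℕ → ℝ → ℝ := fun i x => dyadicFloor i (f x)
  have hu : ∀ i, QuasiConcave1 (u i) := fun i => hf.comp_monotone (monotone_dyadicFloor i)
    (upperSemicontinuous_dyadicFloor i) (dyadicFloor_zero i)
  have hmono : Monotone u := fun i j hij x => monotone_dyadicFloor_left (hf.1 x) hij
  have hlim : ∀ x, Tendsto (fun i => u i x) atTop (𝓝 (f x)) := fun x =>
    tendsto_dyadicFloor (hf.1 x)
  have heq : ∀ i, μ (u i) = ν (u i) := fun i =>
    hμ.eq_of_finite_range hν h (hu i) (finite_range_dyadicFloor_comp hf.bddAbove_range i)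
  refine tendsto_nhds_unique (hμ_cont u f hu hf (.inl hmono) hlim) ?_
  simpa only [heq] using hν_cont u f hu hf (.inl hmono) hlim

/-! ### Functionals given by two densities -/

/-- `μ f = G (max f) + ∫ F (f x) dx` for all quasi-concave `f`: the general form of an invariant
continuous valuation, with densities `G` and `F`. By the layer cake formula, this is the
representation by measures with distribution functions `G` and `F`. -/
def HasDensities (μ : (ℝ → ℝ) → ℝ) (G F : ℝ → ℝ) : Prop :=
  ∀ f, QuasiConcave1 f → μ f = G (⨆ x, f x) + ∫ x, F (f x)

namespace HasDensities

variable {μ : (ℝ → ℝ) → ℝ} {G F : ℝ → ℝ} {δ : ℝ}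

lemma isValuation1 (h : HasDensities μ G F) (hG0 : G 0 = 0) (hF : Continuous F) (hδ : 0 < δ)
    (hF0 : ∀ s ∈ Set.Icc 0 δ, F s = 0) : IsValuation1 μ := by
  refine ⟨?_, fun f g hf hg hmax => ?_⟩
  · rw [h _ .zero, ciSup_const, hG0, hF0 0 ⟨le_rfl, hδ.le⟩, integral_zero, add_zero]
  have hint : ∀ {f : ℝ → ℝ}, QuasiConcave1 f → Integrable fun x => F (f x) :=
    fun hf => hf.integrable_comp hF hδ hF0
  have hG : G (max (⨆ x, f x) (⨆ x, g x)) + G (min (⨆ x, f x) (⨆ x, g x)) =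
      G (⨆ x, f x) + G (⨆ x, g x) := by
    rcases le_total (⨆ x, f x) (⨆ x, g x) with hle | hle
    · rw [max_eq_right hle, min_eq_left hle, add_comm]
    · rw [max_eq_left hle, min_eq_right hle]
  have hFint : (∫ x, F (max (f x) (g x))) + ∫ x, F (min (f x) (g x)) =
      (∫ x, F (f x)) + ∫ x, F (g x) := by
    rw [← integral_add (hint hmax) (hint (hf.min hg)), ← integral_add (hint hf) (hint hg)]
    congr 1 with x
    rcases le_total (f x) (g x) with hle | hle
    · rw [max_eq_right hle, min_eq_left hle, add_comm]
    · rw [max_eq_left hle, min_eq_right hle]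
  rw [h _ hmax, h _ (hf.min hg), h f hf, h g hg, hf.iSup_max hg, hf.iSup_min hg hmax]
  linarith

lemma isInvariantVal1 (h : HasDensities μ G F) : IsInvariantVal1 μ := fun T f hf => by
  have hT : MeasurePreserving T :=
    hausdorffMeasure_real ▸ T.measurePreserving_hausdorffMeasure 1
  have hfT : QuasiConcave1 fun x => f (T x) := hf.comp_homeomorph T.toHomeomorph
  rw [h _ hfT, h f hf, T.surjective.iSup_comp,
    hT.integral_comp T.toHomeomorph.measurableEmbedding fun x => F (f x)]

lemma isContinuousVal1 (h : HasDensities μ G F) (hG : Continuous G) (hF : Continuous F)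
    (hδ : 0 < δ) (hF0 : ∀ s ∈ Set.Icc 0 δ, F s = 0) : IsContinuousVal1 μ := by
  intro u f hu hf hmono hlim
  have hsup : Tendsto (fun i => ⨆ x, u i x) atTop (𝓝 (⨆ x, f x)) := hmono.elim
    (fun hm => QuasiConcave1.tendsto_iSup_of_monotone hu hf hm hlim)
    (fun ha => QuasiConcave1.tendsto_iSup_of_antitone hu hf ha hlim)
  simpa only [h f hf, h _ (hu _), Function.comp_apply] using ((hG.tendsto _).comp hsup).add
    (QuasiConcave1.tendsto_integral_comp hu hf hF hδ hF0 hmono hlim)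

lemma isMonotoneVal1 (h : HasDensities μ G F) (hG : Monotone G) (hF_mono : Monotone F)
    (hF : Continuous F) (hδ : 0 < δ) (hF0 : ∀ s ∈ Set.Icc 0 δ, F s = 0) : IsMonotoneVal1 μ := by
  intro f g hf hg hfg
  rw [h f hf, h g hg]
  exact add_le_add (hG (hg.iSup_mono hfg)) (integral_mono (hf.integrable_comp hF hδ hF0)
    (hg.integrable_comp hF hδ hF0) fun x => hF_mono (hfg x))

lemma map_indicator_Icc (h : HasDensities μ G F) (hF0 : F 0 = 0) {t a b : ℝ} (ht : 0 ≤ t)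
    (hab : a ≤ b) : μ ((Set.Icc a b).indicator fun _ => t) = G t + F t * (b - a) := by
  have hcomp : ∀ x, F ((Set.Icc a b).indicator (fun _ => t) x) =
      (Set.Icc a b).indicator (fun _ => F t) x :=
    fun x => Set.indicator_comp_of_zero hF0 (f := fun _ => t) ▸ rfl
  rw [h _ (.indicator_Icc a b ht), QuasiConcave1.iSup_indicator_const (Set.nonempty_Icc.2 hab) ht]
  simp only [hcomp]
  rw [integral_indicator_const _ measurableSet_Icc, Real.volume_real_Icc_of_le hab, smul_eq_mul,
    mul_comm]

end HasDensities

/-! ### The densities of a valuation -/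

lemma continuous_of_tendsto_comp_monotone_or_antitone {α β : Type*} [LinearOrder α]
    [TopologicalSpace α] [SequentialSpace α] [TopologicalSpace β] {g : α → β}
    (h : ∀ (u : ℕ → α) (a : α), (Monotone u ∨ Antitone u) → Tendsto u atTop (𝓝 a) →
      Tendsto (fun n => g (u n)) atTop (𝓝 (g a))) : Continuous g := by
  refine continuous_iff_seqContinuous.2 fun u a hu => tendsto_of_subseq_tendsto fun ns hns => ?_
  have hlim : Tendsto (u ∘ ns) atTop (𝓝 a) := hu.comp hns
  obtain ⟨ms, hmono | hanti⟩ := exists_increasing_or_nonincreasing_subseq (· ≤ ·) (u ∘ ns)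
  · refine ⟨ms, h _ a (.inl <| monotone_iff_forall_lt.2 hmono) ?_⟩
    exact hlim.comp ms.strictMono.tendsto_atTop
  · refine ⟨ms, h _ a (.inr <| antitone_iff_forall_lt.2 fun m n hmn => ?_) ?_⟩
    · exact le_of_not_ge (hanti m n hmn)
    · exact hlim.comp ms.strictMono.tendsto_atTop

lemma eq_mul_of_map_add_of_monotoneOn {ψ : ℝ → ℝ}
    (hadd : ∀ x y, 0 ≤ x → 0 ≤ y → ψ (x + y) = ψ x + ψ y) (hmono : MonotoneOn ψ (Set.Ici 0))
    {x : ℝ} (hx : 0 ≤ x) : ψ x = ψ 1 * x := by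
  have hψ0 : ψ 0 = 0 := by
    simpa only [add_zero, left_eq_add] using hadd 0 0 le_rfl le_rfl
  have hmul : ∀ (n : ℕ) {y : ℝ}, 0 ≤ y → ψ (n * y) = n * ψ y := fun n y hy => by
    induction n with
    | zero => rw [Nat.cast_zero, zero_mul, zero_mul, hψ0]
    | succ n ih => rw [Nat.cast_succ, add_one_mul, hadd _ _ (by positivity) hy, ih, add_one_mul]
  have hcast : ∀ n : ℕ, ψ n = ψ 1 * n := fun n => by
    rw [← mul_one (n : ℝ), hmul n zero_le_one, mul_one, mul_comm]
  have hxn : ∀ n : ℕ, 0 ≤ x * n := fun n => by positivity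
  apply le_antisymm
  · refine ge_of_tendsto ((tendsto_nat_ceil_mul_div_atTop hx).comp
      tendsto_natCast_atTop_atTop |>.const_mul (ψ 1)) ?_
    filter_upwards [eventually_gt_atTop 0] with n hn
    have hceil : n * ψ x ≤ ψ 1 * ⌈x * n⌉₊ := by
      rw [← hmul n hx, ← hcast, mul_comm (n : ℝ)]
      exact hmono (hxn n) (Set.mem_Ici.2 (Nat.cast_nonneg _)) (Nat.le_ceil _)
    rw [Function.comp_apply, ← mul_div_assoc, le_div_iff₀' (Nat.cast_pos.2 hn)]
    exact hceil
  · refine le_of_tendsto ((tendsto_nat_floor_mul_div_atTop hx).comp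
      tendsto_natCast_atTop_atTop |>.const_mul (ψ 1)) ?_
    filter_upwards [eventually_gt_atTop 0] with n hn
    have hfloor : ψ 1 * ⌊x * n⌋₊ ≤ n * ψ x := by
      rw [← hmul n hx, ← hcast, mul_comm (n : ℝ)]
      exact hmono (Set.mem_Ici.2 (Nat.cast_nonneg _)) (hxn n) (Nat.floor_le (hxn n))
    rw [Function.comp_apply, ← mul_div_assoc, div_le_iff₀' (Nat.cast_pos.2 hn)]
    exact hfloor

lemma slope_le_of_forall_affine_le {a b c d : ℝ} (h : ∀ l, 0 ≤ l → a + b * l ≤ c + d * l) :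
    b ≤ d := by
  by_contra! hdb
  have hpos : 0 < b - d := sub_pos.2 hdb
  have hl := h ((|c - a| + 1) / (b - d)) (by positivity)
  have hcancel : (b - d) * ((|c - a| + 1) / (b - d)) = |c - a| + 1 := mul_div_cancel₀ _ hpos.ne'
  linarith [le_abs_self (c - a)]

/-- The value of `μ` on the multiple by `t` of the indicator of an interval of length `l`.
Negative heights count as `0`, so that this is monotone and continuous in `t : ℝ`. -/
def boxValue (μ : (ℝ → ℝ) → ℝ) (t l : ℝ) : ℝ := μ ((Set.Icc 0 l).indicator fun _ => max t 0)

/-- The density of the Euler characteristic part of `μ`, read off on points. -/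
def density₀ (μ : (ℝ → ℝ) → ℝ) (t : ℝ) : ℝ := boxValue μ t 0

/-- The density of the volume part of `μ`, read off on intervals of length one. -/
def density₁ (μ : (ℝ → ℝ) → ℝ) (t : ℝ) : ℝ := boxValue μ t 1 - boxValue μ t 0

section Densities

variable {μ : (ℝ → ℝ) → ℝ}

lemma IsInvariantVal1.map_indicator_Icc (hinv : IsInvariantVal1 μ) {t : ℝ} (ht : 0 ≤ t)
    (a b : ℝ) : μ ((Set.Icc a b).indicator fun _ => t) = boxValue μ t (b - a) := by
  rw [boxValue, max_eq_left ht, ← hinv (.addRight (-a)) _ (.indicator_Icc 0 (b - a) ht)]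
  congr 1 with x
  simp only [Set.indicator_apply, IsometryEquiv.addRight_apply, Set.mem_Icc, ← sub_eq_add_neg,
    sub_nonneg, sub_le_sub_iff_right]

lemma IsMonotoneVal1.boxValue_le (hmono : IsMonotoneVal1 μ) {s t k l : ℝ} (hst : s ≤ t)
    (hkl : k ≤ l) : boxValue μ s k ≤ boxValue μ t l := by
  refine hmono _ _ (.indicator_Icc _ _ (le_max_right _ _)) (.indicator_Icc _ _ (le_max_right _ _))
    fun x => ?_
  calc (Set.Icc 0 k).indicator (fun _ => max s 0) x
      ≤ (Set.Icc 0 k).indicator (fun _ => max t 0) x :=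
        Set.indicator_le_indicator (max_le_max_right 0 hst)
    _ ≤ (Set.Icc 0 l).indicator (fun _ => max t 0) x :=
        Set.indicator_le_indicator_of_subset (Set.Icc_subset_Icc_right hkl)
          (fun _ => le_max_right _ _) x

lemma IsValuation1.boxValue_of_nonpos (hμ : IsValuation1 μ) {t : ℝ} (ht : t ≤ 0) (l : ℝ) :
    boxValue μ t l = 0 := by
  rw [boxValue, max_eq_right ht, Set.indicator_zero, hμ.1]

lemma IsContinuousVal1.continuous_boxValue (hcont : IsContinuousVal1 μ) (l : ℝ) :
    Continuous fun t => boxValue μ t l := by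
  refine continuous_of_tendsto_comp_monotone_or_antitone fun u t hmono hu => ?_
  have hbox : ∀ s : ℝ, QuasiConcave1 ((Set.Icc 0 l).indicator fun _ => max s 0) :=
    fun s => .indicator_Icc 0 l (le_max_right s 0)
  refine hcont _ _ (fun i => hbox (u i)) (hbox t) (hmono.imp ?_ ?_) fun x => ?_
  · exact fun hm i j hij x => Set.indicator_le_indicator (max_le_max_right 0 (hm hij))
  · exact fun ha i j hij x => Set.indicator_le_indicator (max_le_max_right 0 (ha hij))
  · by_cases hx : x ∈ Set.Icc 0 l
    · simpa only [Set.indicator_of_mem hx] using hu.max tendsto_const_nhds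
    · simpa only [Set.indicator_of_notMem hx] using tendsto_const_nhds

lemma IsValuation1.boxValue_add (hμ : IsValuation1 μ) (hinv : IsInvariantVal1 μ) {t k l : ℝ}
    (ht : 0 ≤ t) (hk : 0 ≤ k) (hl : 0 ≤ l) :
    boxValue μ t (k + l) + boxValue μ t 0 = boxValue μ t k + boxValue μ t l := by
  have hkl : k ≤ k + l := le_add_of_nonneg_right hl
  have hunion : Set.Icc 0 k ∪ Set.Icc k (k + l) = Set.Icc 0 (k + l) :=
    Set.Icc_union_Icc_eq_Icc hk hkl
  have hinter : Set.Icc 0 k ∩ Set.Icc k (k + l) = Set.Icc k k := by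
    rw [Set.Icc_inter_Icc_eq_singleton hk hkl, Set.Icc_self]
  have hval := hμ.map_indicator_union_add_inter ht (.indicator_Icc 0 k ht)
    (.indicator_Icc k (k + l) ht) (hunion ▸ .indicator_Icc 0 (k + l) ht)
  simpa only [hunion, hinter, hinv.map_indicator_Icc ht, sub_zero, sub_self, add_sub_cancel_left]
    using hval

theorem boxValue_eq_density (hμ : IsValuation1 μ) (hinv : IsInvariantVal1 μ)
    (hmono : IsMonotoneVal1 μ) (t : ℝ) {l : ℝ} (hl : 0 ≤ l) :
    boxValue μ t l = density₀ μ t + density₁ μ t * l := by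
  rcases le_total t 0 with ht | ht
  · simp only [density₀, density₁, hμ.boxValue_of_nonpos ht, sub_self, zero_mul, add_zero]
  have hlinear : boxValue μ t l - boxValue μ t 0 = density₁ μ t * l :=
    eq_mul_of_map_add_of_monotoneOn (ψ := fun l => boxValue μ t l - boxValue μ t 0)
      (fun k l hk hl => by linarith [hμ.boxValue_add hinv ht hk hl])
      (fun k _ l _ hkl => sub_le_sub_right (hmono.boxValue_le le_rfl hkl) _) hl
  rw [← hlinear, density₀, add_sub_cancel]

lemma IsMonotoneVal1.monotone_density₀ (hmono : IsMonotoneVal1 μ) : Monotone (density₀ μ) :=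
  fun _ _ hst => hmono.boxValue_le hst le_rfl

lemma monotone_density₁ (hμ : IsValuation1 μ) (hinv : IsInvariantVal1 μ)
    (hmono : IsMonotoneVal1 μ) : Monotone (density₁ μ) := fun s t hst =>
  slope_le_of_forall_affine_le fun l hl => by
    rw [← boxValue_eq_density hμ hinv hmono s hl, ← boxValue_eq_density hμ hinv hmono t hl]
    exact hmono.boxValue_le hst le_rfl

lemma IsContinuousVal1.continuous_density₀ (hcont : IsContinuousVal1 μ) :
    Continuous (density₀ μ) :=
  hcont.continuous_boxValue 0

lemma IsContinuousVal1.continuous_density₁ (hcont : IsContinuousVal1 μ) :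
    Continuous (density₁ μ) :=
  (hcont.continuous_boxValue 1).sub (hcont.continuous_boxValue 0)

lemma IsValuation1.density₀_of_nonpos (hμ : IsValuation1 μ) {t : ℝ} (ht : t ≤ 0) :
    density₀ μ t = 0 :=
  hμ.boxValue_of_nonpos ht 0

lemma IsValuation1.density₁_of_nonpos (hμ : IsValuation1 μ) {t : ℝ} (ht : t ≤ 0) :
    density₁ μ t = 0 := by
  rw [density₁, hμ.boxValue_of_nonpos ht, hμ.boxValue_of_nonpos ht, sub_self]

/-- The upper envelope of the boxes of height `t ∈ (0, 1]` over `[0, ℓ t]`. Where there is no box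
it is `0`, the junk value of `sSup ∅`. -/
def boxEnvelope (ℓ : ℝ → ℝ) (x : ℝ) : ℝ := sSup {t | t ∈ Set.Ioc 0 1 ∧ x ∈ Set.Icc 0 (ℓ t)}

lemma le_boxEnvelope {ℓ : ℝ → ℝ} {t x : ℝ} (ht : t ∈ Set.Ioc 0 1) (hx : x ∈ Set.Icc 0 (ℓ t)) :
    t ≤ boxEnvelope ℓ x :=
  le_csSup ⟨1, fun _ hs => hs.1.2⟩ ⟨ht, hx⟩

lemma boxEnvelope_nonneg (ℓ : ℝ → ℝ) (x : ℝ) : 0 ≤ boxEnvelope ℓ x :=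
  Real.sSup_nonneg fun _ ht => ht.1.1.le

lemma mem_Icc_of_lt_boxEnvelope {ℓ : ℝ → ℝ} (hℓ : AntitoneOn ℓ (Set.Ioc 0 1)) {t x : ℝ}
    (ht : 0 < t) (htx : t < boxEnvelope ℓ x) : x ∈ Set.Icc 0 (ℓ t) := by
  have hne : {t | t ∈ Set.Ioc 0 1 ∧ x ∈ Set.Icc 0 (ℓ t)}.Nonempty := by
    by_contra hempty
    rw [boxEnvelope, Set.not_nonempty_iff_eq_empty.1 hempty, Real.sSup_empty] at htx
    exact ht.not_gt htx
  obtain ⟨s, ⟨hs, hxs⟩, hts⟩ := exists_lt_of_lt_csSup hne htx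
  exact ⟨hxs.1, hxs.2.trans (hℓ ⟨ht, hts.le.trans hs.2⟩ hs hts.le)⟩

lemma quasiConcave1_boxEnvelope {ℓ : ℝ → ℝ} (hℓ : AntitoneOn ℓ (Set.Ioc 0 1)) :
    QuasiConcave1 (boxEnvelope ℓ) := by
  refine ⟨boxEnvelope_nonneg ℓ, fun t ht => ?_⟩
  rcases lt_or_ge 1 t with h1t | ht1
  · left
    refine Set.eq_empty_of_forall_notMem fun x hx => ?_
    exact (hx.trans (Real.sSup_le (fun s hs => hs.1.2) zero_le_one)).not_gt h1t
  · right
    have hlevel : {x | t ≤ boxEnvelope ℓ x} = ⋂ s ∈ Set.Ioo 0 t, Set.Icc 0 (ℓ s) := by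
      ext x
      rw [Set.mem_ofPred_eq, Set.mem_iInter₂]
      refine ⟨fun hx s hs => mem_Icc_of_lt_boxEnvelope hℓ hs.1 (hs.2.trans_le hx),
        fun hx => le_of_forall_lt_imp_le_of_dense fun s hst => ?_⟩
      rcases le_or_gt s 0 with hs | hs
      · exact hs.trans (boxEnvelope_nonneg ℓ x)
      · exact le_boxEnvelope ⟨hs, hst.le.trans ht1⟩ (hx s ⟨hs, hst⟩)
    rw [hlevel]
    have hhalf : t / 2 ∈ Set.Ioo 0 t := ⟨half_pos ht, half_lt_self ht⟩
    exact ⟨isCompact_Icc.of_isClosed_subset (isClosed_biInter fun _ _ => isClosed_Icc)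
      (Set.biInter_subset_of_mem hhalf), convex_iInter₂ fun _ _ => convex_Icc _ _⟩

-- Otherwise a quasi-concave function lies above all boxes of height `t ∈ (0, 1]` and length
-- `1 / (t * density₁ μ t)`, whose values under `μ` are at least `1 / t`, hence unbounded.
lemma exists_density₁_eq_zero (hμ : IsValuation1 μ) (hinv : IsInvariantVal1 μ)
    (hmono : IsMonotoneVal1 μ) : ∃ δ > 0, density₁ μ δ = 0 := by
  by_contra! hne
  have hpos : ∀ t, 0 < t → 0 < density₁ μ t := fun t ht => (hne t ht).symm.lt_of_le <|
    hμ.density₁_of_nonpos le_rfl ▸ monotone_density₁ hμ hinv hmono ht.le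
  have hℓ : AntitoneOn (fun t => (t * density₁ μ t)⁻¹) (Set.Ioc 0 1) :=
    fun s hs t ht hst => inv_anti₀ (mul_pos hs.1 (hpos s hs.1)) <|
      mul_le_mul hst (monotone_density₁ hμ hinv hmono hst) (hpos s hs.1).le ht.1.le
  set f := boxEnvelope fun t => (t * density₁ μ t)⁻¹
  have hf : QuasiConcave1 f := quasiConcave1_boxEnvelope hℓ
  have hbound : ∀ t ∈ Set.Ioc 0 1, t⁻¹ ≤ μ f := fun t ht => by
    have hpt := hpos t ht.1
    have hl : 0 ≤ (t * density₁ μ t)⁻¹ := inv_nonneg.2 (mul_pos ht.1 hpt).le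
    calc t⁻¹ = density₁ μ t * (t * density₁ μ t)⁻¹ := by field_simp
      _ ≤ density₀ μ t + density₁ μ t * (t * density₁ μ t)⁻¹ := le_add_of_nonneg_left <|
          hμ.density₀_of_nonpos le_rfl ▸ hmono.monotone_density₀ ht.1.le
      _ = boxValue μ t (t * density₁ μ t)⁻¹ := (boxValue_eq_density hμ hinv hmono t hl).symm
      _ ≤ μ f := hmono _ _ (.indicator_Icc _ _ (le_max_right t 0)) hf
          (Set.indicator_le' (fun x hx => (max_eq_left ht.1.le).trans_le (le_boxEnvelope ht hx))
            fun x _ => hf.1 x)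
  have h1 : 1 ≤ μ f := by simpa only [inv_one] using hbound 1 ⟨one_pos, le_rfl⟩
  have h2 := hbound (μ f + 1)⁻¹ ⟨by positivity, inv_le_one_of_one_le₀ (by linarith)⟩
  rw [inv_inv] at h2
  linarith

theorem hasDensities_density (hμ : IsValuation1 μ) (hinv : IsInvariantVal1 μ)
    (hcont : IsContinuousVal1 μ) (hmono : IsMonotoneVal1 μ) :
    HasDensities μ (density₀ μ) (density₁ μ) := by
  obtain ⟨δ, hδ, hδ0⟩ := exists_density₁_eq_zero hμ hinv hmono
  have hF0 : ∀ s ∈ Set.Icc 0 δ, density₁ μ s = 0 := fun s hs => le_antisymm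
    (hδ0 ▸ monotone_density₁ hμ hinv hmono hs.2)
    (hμ.density₁_of_nonpos le_rfl ▸ monotone_density₁ hμ hinv hmono hs.1)
  let ν : (ℝ → ℝ) → ℝ := fun f => density₀ μ (⨆ x, f x) + ∫ x, density₁ μ (f x)
  have hν : HasDensities ν (density₀ μ) (density₁ μ) := fun _ _ => rfl
  have hbox : ∀ t a b, 0 ≤ t → a ≤ b → μ ((Set.Icc a b).indicator fun _ => t) =
      ν ((Set.Icc a b).indicator fun _ => t) := fun t a b ht hab => by
    rw [hinv.map_indicator_Icc ht, boxValue_eq_density hμ hinv hmono t (sub_nonneg.2 hab),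
      hν.map_indicator_Icc (hμ.density₁_of_nonpos le_rfl) ht hab]
  exact fun f hf => hμ.eq_of_eq_indicator_Icc
    (hν.isValuation1 (hμ.density₀_of_nonpos le_rfl) hcont.continuous_density₁ hδ hF0) hcont
    (hν.isContinuousVal1 hcont.continuous_density₀ hcont.continuous_density₁ hδ hF0) hbox hf

end Densities

/-! ### Distribution functions -/

/-- The distribution function of a measure on `[0, ∞)`, encoded as a measure on `ℝ`. -/
def distributionFunction (ν : Measure ℝ) (s : ℝ) : ℝ := ν.real (Set.Icc 0 s)

lemma monotone_distributionFunction (ν : Measure ℝ) [IsFiniteMeasureOnCompacts ν] :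
    Monotone (distributionFunction ν) := fun _ _ hst =>
  measureReal_mono (Set.Icc_subset_Icc_right hst) measure_Icc_lt_top.ne

lemma distributionFunction_of_nonpos (ν : Measure ℝ) [NullSingletonClass ν] {s : ℝ} (hs : s ≤ 0) :
    distributionFunction ν s = 0 := by
  rw [distributionFunction, measureReal_def, (Set.subsingleton_Icc_of_ge hs).measure_zero,
    ENNReal.toReal_zero]

lemma continuous_distributionFunction (ν : Measure ℝ) [IsFiniteMeasureOnCompacts ν]
    [NullSingletonClass ν] : Continuous (distributionFunction ν) := by
  have hprim : Continuous fun s : ℝ => ∫ _ in (0 : ℝ)..max s 0, (1 : ℝ) ∂ν :=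
    (intervalIntegral.continuous_primitive (fun _ _ => intervalIntegrable_const) 0).comp
      (continuous_id.max continuous_const)
  convert hprim using 2 with s
  rw [intervalIntegral.integral_of_le (le_max_right s 0), setIntegral_const, smul_eq_mul, mul_one,
    measureReal_congr Ioc_ae_eq_Icc, ← distributionFunction]
  rcases le_total 0 s with hs | hs
  · rw [max_eq_left hs]
  · rw [max_eq_right hs, distributionFunction_of_nonpos ν hs,
      distributionFunction_of_nonpos ν le_rfl]

lemma exists_measure_distributionFunction_eq {G : ℝ → ℝ} (hG : Monotone G) (hG_cont : Continuous G)
    (hG0 : ∀ s ≤ 0, G s = 0) : ∃ ν : Measure ℝ, IsFiniteMeasureOnCompacts ν ∧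
      NullSingletonClass ν ∧ ν (Set.Iio 0) = 0 ∧ distributionFunction ν = G := by
  let S : StieltjesFunction ℝ := ⟨G, hG, fun x => hG_cont.continuousWithinAt⟩
  have hleft : ∀ t, Function.leftLim S t = G t := fun t =>
    hG_cont.continuousAt.continuousWithinAt.leftLim_eq
  have hbot : Tendsto S atBot (𝓝 0) :=
    tendsto_const_nhds.congr' ((eventually_le_atBot 0).mono fun s hs => (hG0 s hs).symm)
  refine ⟨S.measure, inferInstance, ⟨fun t => ?_⟩, ?_, funext fun s => ?_⟩
  · rw [S.measure_singleton, hleft]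
    exact ENNReal.ofReal_eq_zero.2 (sub_self (G t)).le
  · rw [S.measure_Iio hbot, hleft, hG0 0 le_rfl, sub_zero, ENNReal.ofReal_zero]
  · have hGs : 0 ≤ G s := (hG0 _ (min_le_right s 0)).ge.trans (hG (min_le_left s 0))
    rw [distributionFunction, measureReal_def, S.measure_Icc, hleft, hG0 0 le_rfl, sub_zero]
    exact ENNReal.toReal_ofReal hGs

lemma setLIntegral_Ioi_meas_le_eq_lintegral_meas_Ioc {α R : Type*} [MeasurableSpace α]
    [LinearOrder R] [TopologicalSpace R] [OrderClosedTopology R] [SecondCountableTopology R]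
    [MeasurableSpace R] [OpensMeasurableSpace R] (m : Measure α) [SFinite m] (ν : Measure R)
    [SFinite ν] {f : α → R} (hf : Measurable f) (a : R) :
    ∫⁻ t in Set.Ioi a, m {x | t ≤ f x} ∂ν = ∫⁻ x, ν (Set.Ioc a (f x)) ∂m := by
  have hmeas : MeasurableSet {p : R × α | p.1 ≤ f p.2} :=
    measurableSet_le measurable_fst (hf.comp measurable_snd)
  calc ∫⁻ t in Set.Ioi a, m {x | t ≤ f x} ∂ν
      = ((ν.restrict (Set.Ioi a)).prod m) {p | p.1 ≤ f p.2} := (Measure.prod_apply hmeas).symm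
    _ = ∫⁻ x, ν.restrict (Set.Ioi a) (Set.Iic (f x)) ∂m := Measure.prod_apply_symm hmeas
    _ = ∫⁻ x, ν (Set.Ioc a (f x)) ∂m := by
        simp only [Measure.restrict_apply measurableSet_Iic, Set.inter_comm (Set.Iic _),
          Set.Ioi_inter_Iic]

lemma toReal_lintegral_meas_le_eq_integral_distributionFunction {α : Type*} [MeasurableSpace α]
    (m : Measure α) [SFinite m] (ν : Measure ℝ) [IsFiniteMeasureOnCompacts ν]
    [NullSingletonClass ν] {f : α → ℝ} (hf : Measurable f) :
    (∫⁻ t in Set.Ioi 0, m {x | t ≤ f x} ∂ν).toReal = ∫ x, distributionFunction ν (f x) ∂m := by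
  have hmono : Monotone fun s : ℝ => ν (Set.Icc 0 s) :=
    fun _ _ hst => measure_mono (Set.Icc_subset_Icc_right hst)
  have hmeas : Measurable fun x => ν (Set.Icc 0 (f x)) := hmono.measurable.comp hf
  simp only [distributionFunction, measureReal_def]
  rw [integral_toReal hmeas.aemeasurable (.of_forall fun _ => measure_Icc_lt_top),
    setLIntegral_Ioi_meas_le_eq_lintegral_meas_Ioc m ν hf]
  simp only [measure_congr Ioc_ae_eq_Icc]

lemma hasDensities_distributionFunction_iff {μ : (ℝ → ℝ) → ℝ} {ν₀ ν₁ : Measure ℝ}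
    [IsFiniteMeasureOnCompacts ν₁] [NullSingletonClass ν₁] :
    HasDensities μ (distributionFunction ν₀) (distributionFunction ν₁) ↔
      ∀ f, QuasiConcave1 f → μ f = (ν₀ (Set.Icc 0 (sSup (Set.range f)))).toReal +
        (∫⁻ t in Set.Ioi (0 : ℝ), volume {x | t ≤ f x} ∂ν₁).toReal := by
  refine forall₂_congr fun f hf => ?_
  rw [toReal_lintegral_meas_le_eq_integral_distributionFunction volume ν₁ hf.measurable]
  rfl

lemma HasDensities.valuation_properties {μ : (ℝ → ℝ) → ℝ}
    {ν₀ ν₁ : Measure ℝ} [IsFiniteMeasureOnCompacts ν₀] [NullSingletonClass ν₀]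
    [IsFiniteMeasureOnCompacts ν₁] [NullSingletonClass ν₁]
    (h : HasDensities μ (distributionFunction ν₀) (distributionFunction ν₁)) {δ : ℝ} (hδ : 0 < δ)
    (hν₁ : ν₁ (Set.Icc 0 δ) = 0) :
    IsValuation1 μ ∧ IsInvariantVal1 μ ∧ IsContinuousVal1 μ ∧ IsMonotoneVal1 μ := by
  have hG := continuous_distributionFunction ν₀
  have hG0 := distributionFunction_of_nonpos ν₀ le_rfl
  have hF := continuous_distributionFunction ν₁
  have hF0 : ∀ s ∈ Set.Icc 0 δ, distributionFunction ν₁ s = 0 := fun s hs =>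
    (measureReal_eq_zero_iff measure_Icc_lt_top.ne).2
      (measure_mono_null (Set.Icc_subset_Icc_right hs.2) hν₁)
  exact ⟨h.isValuation1 hG0 hF hδ hF0, h.isInvariantVal1, h.isContinuousVal1 hG hF hδ hF0,
    h.isMonotoneVal1 (monotone_distributionFunction ν₀) (monotone_distributionFunction ν₁)
      hF hδ hF0⟩

/-- Characterization of invariant, continuous, monotone increasing valuations on `C^1`:
`μ` is such a valuation if and only if there exist non-atomic Radon measures `ν₀, ν₁`
on `[0,∞)`, with `ν₁([0,δ]) = 0` for some `δ > 0`, such that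
`μ(f) = ν₀([0, M(f)]) + ∫_{(0,∞)} vol_1(L_t(f)) dν₁(t)` for every `f ∈ C^1`,
where `M(f) = sup f` (attained as a maximum). -/
theorem characterization_monotone_valuations_dim_one (μ : (ℝ → ℝ) → ℝ) :
    (IsValuation1 μ ∧ IsInvariantVal1 μ ∧ IsContinuousVal1 μ ∧ IsMonotoneVal1 μ) ↔
    ∃ ν₀ ν₁ : Measure ℝ, ∃ δ > (0:ℝ),
      ν₀ (Set.Iio 0) = 0 ∧ ν₁ (Set.Iio 0) = 0 ∧
      (∀ K : Set ℝ, IsCompact K → ν₀ K ≠ ⊤) ∧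
      (∀ K : Set ℝ, IsCompact K → ν₁ K ≠ ⊤) ∧
      (∀ t : ℝ, ν₀ {t} = 0) ∧ (∀ t : ℝ, ν₁ {t} = 0) ∧
      ν₁ (Set.Icc 0 δ) = 0 ∧
      ∀ f : ℝ → ℝ, QuasiConcave1 f →
        μ f = (ν₀ (Set.Icc 0 (sSup (Set.range f)))).toReal +
          (∫⁻ t in Set.Ioi (0:ℝ), volume {x | t ≤ f x} ∂ν₁).toReal := by
  constructor
  · rintro ⟨hμ, hinv, hcont, hmono⟩
    have hdens := hasDensities_density hμ hinv hcont hmono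
    obtain ⟨δ, hδ, hδ0⟩ := exists_density₁_eq_zero hμ hinv hmono
    obtain ⟨ν₀, _, _, hneg₀, hν₀⟩ := exists_measure_distributionFunction_eq
      hmono.monotone_density₀ hcont.continuous_density₀ fun _ => hμ.density₀_of_nonpos
    obtain ⟨ν₁, _, _, hneg₁, hν₁⟩ := exists_measure_distributionFunction_eq
      (monotone_density₁ hμ hinv hmono) hcont.continuous_density₁ fun _ => hμ.density₁_of_nonpos
    rw [← hν₁] at hδ0 hdens
    rw [← hν₀] at hdens
    exact ⟨ν₀, ν₁, δ, hδ, hneg₀, hneg₁, fun K hK => hK.measure_lt_top.ne,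
      fun K hK => hK.measure_lt_top.ne, measure_singleton, measure_singleton,
      (measureReal_eq_zero_iff measure_Icc_lt_top.ne).1 hδ0,
      hasDensities_distributionFunction_iff.1 hdens⟩
  · rintro ⟨ν₀, ν₁, δ, hδ, -, -, hfin₀, hfin₁, hatom₀, hatom₁, hδ0, hrepr⟩
    have : IsFiniteMeasureOnCompacts ν₀ := ⟨fun K hK => (hfin₀ K hK).lt_top⟩
    have : IsFiniteMeasureOnCompacts ν₁ := ⟨fun K hK => (hfin₁ K hK).lt_top⟩
    have : NullSingletonClass ν₀ := ⟨hatom₀⟩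
    have : NullSingletonClass ν₁ := ⟨hatom₁⟩
    exact (hasDensities_distributionFunction_iff.2 hrepr).valuation_properties hδ hδ0

end
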